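/- arXiv:math/0609603 — 3 statements merged into one kernel-verified Lean document; each statement's English description precedes it below -/
import Mathlib

section
/- For every real number a ≥ 0, ∫₀^∞ ρ² e^{−aρ²} (∫_ρ^∞ e^{−η²} dη) dρ = (1/2) ∫₁^∞ (ζ² + a)^{−2} dζ, and both integrals are finite. -/
open MeasureTheory Real

theorem integrableOn_pow_three_mul_exp_neg_mul_sq {b : ℝ} (hb : 0 < b) :
    IntegrableOn (fun x : ℝ => x ^ 3 * exp (-b * x ^ 2)) (Set.Ioi 0) := by
  simpa using integrableOn_rpow_mul_exp_neg_mul_sq hb (s := (3 : ℕ)) (by norm_num)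

theorem integral_pow_three_mul_exp_neg_mul_sq {b : ℝ} (hb : 0 < b) :
    ∫ x in Set.Ioi (0 : ℝ), x ^ 3 * exp (-b * x ^ 2) = 1 / 2 * (1 / b ^ 2) := by
  have h := integral_rpow_mul_exp_neg_mul_rpow (p := (2 : ℕ)) (q := (3 : ℕ)) (by norm_num)
    (by norm_num) hb
  simp only [rpow_natCast] at h
  rw [h, show -(((3 : ℕ) : ℝ) + 1) / ((2 : ℕ) : ℝ) = -((2 : ℕ) : ℝ) by norm_num,
    show (((3 : ℕ) : ℝ) + 1) / ((2 : ℕ) : ℝ) = 2 by norm_num, rpow_neg hb.le, rpow_natCast,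
    Gamma_two]
  push_cast
  ring

theorem integrableOn_one_div_sq_add_sq {a : ℝ} (ha : 0 ≤ a) :
    IntegrableOn (fun ζ : ℝ => 1 / (ζ ^ 2 + a) ^ 2) (Set.Ici 1) := by
  refine Integrable.mono' (integrable_inv_one_add_sq.const_mul 2).integrableOn
    (Measurable.aestronglyMeasurable (by fun_prop)) ?_
  filter_upwards [ae_restrict_mem measurableSet_Ici] with ζ (hζ : 1 ≤ ζ)
  have h : 1 ≤ ζ ^ 2 := one_le_pow₀ hζ
  rw [norm_of_nonneg (by positivity), ← div_eq_mul_inv, div_le_div_iff₀ (by positivity)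
    (by positivity)]
  nlinarith

theorem integral_Ioi_exp_neg_sq_eq_mul {ρ : ℝ} (hρ : 0 < ρ) :
    ∫ η in Set.Ioi ρ, exp (-η ^ 2) = ρ * ∫ ζ in Set.Ici (1 : ℝ), exp (-(ρ * ζ) ^ 2) := by
  rw [integral_Ici_eq_integral_Ioi,
    integral_comp_mul_left_Ioi (fun η => exp (-η ^ 2)) 1 hρ, mul_one, smul_eq_mul,
    mul_inv_cancel_left₀ hρ.ne']

theorem integrable_prod_pow_three_mul_exp {a : ℝ} (ha : 0 ≤ a) :
    Integrable (Function.uncurry fun ρ ζ : ℝ => ρ ^ 3 * exp (-(ζ ^ 2 + a) * ρ ^ 2))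
      ((volume.restrict (Set.Ioi 0)).prod (volume.restrict (Set.Ici 1))) := by
  have hpos : ∀ ζ ∈ Set.Ici (1 : ℝ), 0 < ζ ^ 2 + a := fun ζ (hζ : 1 ≤ ζ) => by positivity
  rw [integrable_prod_iff' (by
    apply Continuous.aestronglyMeasurable; unfold Function.uncurry; fun_prop)]
  refine ⟨?_, ?_⟩
  · filter_upwards [ae_restrict_mem measurableSet_Ici] with ζ hζ
    exact integrableOn_pow_three_mul_exp_neg_mul_sq (hpos ζ hζ)
  · refine ((integrableOn_one_div_sq_add_sq ha).const_mul (1 / 2)).congr ?_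
    filter_upwards [ae_restrict_mem measurableSet_Ici] with ζ hζ
    rw [← integral_pow_three_mul_exp_neg_mul_sq (hpos ζ hζ)]
    refine setIntegral_congr_fun measurableSet_Ioi fun ρ (hρ : 0 < ρ) => ?_
    exact (norm_of_nonneg (by positivity)).symm

theorem integral_sq_exp_mul_erfc_eq (a : ℝ) (ha : 0 ≤ a) :
    (∫ ρ in Set.Ioi (0:ℝ),
        ρ ^ 2 * Real.exp (-a * ρ ^ 2) * ∫ η in Set.Ioi ρ, Real.exp (-η ^ 2))
      = (1 / 2) * ∫ ζ in Set.Ici (1:ℝ), 1 / (ζ ^ 2 + a) ^ 2 ∧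
    IntegrableOn
      (fun ρ => ρ ^ 2 * Real.exp (-a * ρ ^ 2) * ∫ η in Set.Ioi ρ, Real.exp (-η ^ 2))
      (Set.Ioi (0:ℝ)) ∧
    IntegrableOn (fun ζ => 1 / (ζ ^ 2 + a) ^ 2) (Set.Ici (1:ℝ)) := by
  have hF := integrable_prod_pow_three_mul_exp ha
  have hinner : Set.EqOn
      (fun ρ => ρ ^ 2 * exp (-a * ρ ^ 2) * ∫ η in Set.Ioi ρ, exp (-η ^ 2))
      (fun ρ => ∫ ζ in Set.Ici (1:ℝ), ρ ^ 3 * exp (-(ζ ^ 2 + a) * ρ ^ 2)) (Set.Ioi 0) := by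
    intro ρ hρ
    simp only
    rw [integral_Ioi_exp_neg_sq_eq_mul hρ, ← mul_assoc, ← integral_const_mul]
    congr 1 with ζ
    rw [show -(ζ ^ 2 + a) * ρ ^ 2 = -a * ρ ^ 2 + -(ρ * ζ) ^ 2 by ring, exp_add]
    ring
  refine ⟨?_, ?_, integrableOn_one_div_sq_add_sq ha⟩
  · rw [setIntegral_congr_fun measurableSet_Ioi hinner, integral_integral_swap hF,
      ← integral_const_mul]
    refine setIntegral_congr_fun measurableSet_Ici fun ζ (hζ : 1 ≤ ζ) => ?_
    exact integral_pow_three_mul_exp_neg_mul_sq (by positivity)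
  · exact (integrableOn_congr_fun hinner measurableSet_Ioi).2 hF.integral_prod_left
end

section
/- For every real number a > 0, ∫₀^∞ ρ² e^{−aρ²} (∫_ρ^∞ e^{−η²} dη) dρ = π/(8 a^{3/2}) − 1/(4a(a+1)) − arctan(a^{−1/2})/(4 a^{3/2}). -/
open MeasureTheory Real

lemma integrableOn_cube_mul_exp_neg_mul_sq {c : ℝ} (hc : 0 < c) :
    IntegrableOn (fun x : ℝ => x ^ 3 * exp (-c * x ^ 2)) (Set.Ioi 0) := by
  simpa only [← rpow_natCast, Nat.cast_ofNat] using
    integrableOn_rpow_mul_exp_neg_mul_sq hc (s := 3) (by norm_num)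

lemma integral_cube_mul_exp_neg_mul_sq {c : ℝ} (hc : 0 < c) :
    ∫ x in Set.Ioi (0:ℝ), x ^ 3 * exp (-c * x ^ 2) = 1 / (2 * c ^ 2) := by
  have h := integral_rpow_mul_exp_neg_mul_rpow (p := 2) (q := 3) two_pos (by norm_num) hc
  have e : (3 + 1 : ℝ) / 2 = 2 := by norm_num
  rw [neg_div, e, Gamma_two, rpow_neg hc.le] at h
  simp only [← rpow_natCast, Nat.cast_ofNat]
  rw [h]
  ring

lemma hasDerivAt_div_add_arctan {s : ℝ} (hs : 0 < s) (t : ℝ) :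
    HasDerivAt (fun t => t / (4 * s ^ 2 * (s ^ 2 + t ^ 2)) + arctan (t / s) / (4 * s ^ 3))
      (1 / (2 * (s ^ 2 + t ^ 2) ^ 2)) t := by
  have hst : s ^ 2 + t ^ 2 ≠ 0 := by positivity
  have h1 : HasDerivAt (fun t : ℝ => 4 * s ^ 2 * (s ^ 2 + t ^ 2)) (4 * s ^ 2 * (2 * t)) t := by
    simpa using ((hasDerivAt_pow 2 t).const_add (s ^ 2)).const_mul (4 * s ^ 2)
  have h2 := ((hasDerivAt_id t).div_const s).arctan.div_const (4 * s ^ 3)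
  refine (((hasDerivAt_id t).div h1 (by positivity)).add h2).congr_deriv ?_
  have : 1 + (t / s) ^ 2 = (s ^ 2 + t ^ 2) / s ^ 2 := by field_simp
  simp only [id, this]
  field_simp
  ring

open Filter Topology in
lemma tendsto_div_add_arctan_atTop {s : ℝ} (hs : 0 < s) :
    Tendsto (fun t => t / (4 * s ^ 2 * (s ^ 2 + t ^ 2)) + arctan (t / s) / (4 * s ^ 3)) atTop
      (𝓝 (π / (8 * s ^ 3))) := by
  have h1 : Tendsto (fun t : ℝ => t / (4 * s ^ 2 * (s ^ 2 + t ^ 2))) atTop (𝓝 0) := by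
    refine squeeze_zero' (g := fun t : ℝ => (4 * s ^ 2)⁻¹ * t⁻¹) ?_ ?_ ?_
    · filter_upwards [eventually_gt_atTop 0] with t ht
      positivity
    · filter_upwards [eventually_gt_atTop 0] with t ht
      rw [← mul_inv, div_le_iff₀ (by positivity), ← div_eq_inv_mul, le_div_iff₀ (by positivity)]
      have : 0 < s ^ 2 * s ^ 2 := by positivity
      nlinarith
    · simpa only [mul_zero] using (tendsto_inv_atTop_zero (𝕜 := ℝ)).const_mul (4 * s ^ 2)⁻¹
  have h2 : Tendsto (fun t : ℝ => arctan (t / s)) atTop (𝓝 (π / 2)) :=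
    (tendsto_arctan_atTop.mono_right nhdsWithin_le_nhds).comp (tendsto_id.atTop_div_const hs)
  convert h1.add (h2.div_const (4 * s ^ 3)) using 2
  ring

lemma integrableOn_one_div_sq_add_sq_sq {s : ℝ} (hs : 0 < s) (b : ℝ) :
    IntegrableOn (fun t : ℝ => 1 / (2 * (s ^ 2 + t ^ 2) ^ 2)) (Set.Ioi b) :=
  integrableOn_Ioi_deriv_of_nonneg' (fun t _ => hasDerivAt_div_add_arctan hs t)
    (fun t _ => by positivity) (tendsto_div_add_arctan_atTop hs)

lemma integral_Ioi_one_div_sq_add_sq_sq {s : ℝ} (hs : 0 < s) (b : ℝ) :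
    ∫ t in Set.Ioi b, 1 / (2 * (s ^ 2 + t ^ 2) ^ 2) =
      π / (8 * s ^ 3) - (b / (4 * s ^ 2 * (s ^ 2 + b ^ 2)) + arctan (b / s) / (4 * s ^ 3)) :=
  integral_Ioi_of_hasDerivAt_of_nonneg' (fun t _ => hasDerivAt_div_add_arctan hs t)
    (fun t _ => by positivity) (tendsto_div_add_arctan_atTop hs)

lemma integrable_prod_cube_mul_exp {s : ℝ} (hs : 0 < s) (b : ℝ) :
    Integrable (Function.uncurry fun ρ t : ℝ => ρ ^ 3 * exp (-(s ^ 2 + t ^ 2) * ρ ^ 2))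
      ((volume.restrict (Set.Ioi 0)).prod (volume.restrict (Set.Ioi b))) := by
  have hpos (t : ℝ) : 0 < s ^ 2 + t ^ 2 := by positivity
  rw [integrable_prod_iff' (by unfold Function.uncurry; fun_prop)]
  refine ⟨.of_forall fun t => integrableOn_cube_mul_exp_neg_mul_sq (hpos t), ?_⟩
  refine (integrableOn_one_div_sq_add_sq_sq hs b).congr (.of_forall fun t => ?_)
  dsimp only [Function.uncurry]
  rw [← integral_cube_mul_exp_neg_mul_sq (hpos t)]
  refine setIntegral_congr_fun measurableSet_Ioi fun ρ hρ => ?_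
  have : (0 : ℝ) < ρ := hρ
  exact (norm_of_nonneg (by positivity)).symm

lemma sq_mul_exp_mul_integral_Ioi_exp_neg_sq (a : ℝ) {ρ : ℝ} (hρ : 0 < ρ) :
    ρ ^ 2 * exp (-a * ρ ^ 2) * ∫ η in Set.Ioi ρ, exp (-η ^ 2) =
      ∫ t in Set.Ioi (1:ℝ), ρ ^ 3 * exp (-(a + t ^ 2) * ρ ^ 2) := by
  have h := integral_comp_mul_left_Ioi' (fun η => exp (-η ^ 2)) 1 hρ
  rw [mul_one, smul_eq_mul] at h
  rw [← h, ← mul_assoc, ← integral_const_mul]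
  congr with t
  rw [show -(a + t ^ 2) * ρ ^ 2 = -a * ρ ^ 2 + -(ρ * t) ^ 2 by ring, exp_add]
  ring

theorem integral_sq_exp_mul_erfc_closed_form (a : ℝ) (ha : 0 < a) :
    (∫ ρ in Set.Ioi (0:ℝ),
        ρ ^ 2 * Real.exp (-a * ρ ^ 2) * ∫ η in Set.Ioi ρ, Real.exp (-η ^ 2))
      = Real.pi / (8 * a ^ ((3:ℝ)/2)) - 1 / (4 * a * (a + 1))
          - Real.arctan (a ^ (-(1:ℝ)/2)) / (4 * a ^ ((3:ℝ)/2)) := by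
  obtain ⟨s, hs, rfl⟩ : ∃ s : ℝ, 0 < s ∧ s ^ 2 = a := ⟨√a, sqrt_pos.2 ha, sq_sqrt ha.le⟩
  have h3 : (s ^ 2) ^ ((3:ℝ)/2) = s ^ 3 := by
    rw [← rpow_natCast_mul hs.le, ← rpow_natCast]
    norm_num
  have h1 : (s ^ 2) ^ (-(1:ℝ)/2) = 1 / s := by
    rw [← rpow_natCast_mul hs.le, one_div, ← rpow_neg_one]
    norm_num
  rw [setIntegral_congr_fun measurableSet_Ioi fun ρ hρ =>
      sq_mul_exp_mul_integral_Ioi_exp_neg_sq (s ^ 2) hρ,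
    integral_integral_swap (integrable_prod_cube_mul_exp hs 1), h3, h1]
  have hpos (t : ℝ) : 0 < s ^ 2 + t ^ 2 := by positivity
  simp_rw [fun t => integral_cube_mul_exp_neg_mul_sq (hpos t)]
  rw [integral_Ioi_one_div_sq_add_sq_sq hs]
  ring
end

section
/- For every positive integer k, ∫₀^∞ (∫_r^∞ e^{−η²} dη)^k dr = (1/2) Γ((k+1)/2) ∫_{[1,∞)^k} (η₁² + ⋯ + η_k²)^{−(k+1)/2} dη₁ ⋯ dη_k, and both sides are finite. -/
open MeasureTheory Real Finset

theorem integrable_exp_neg_sq : Integrable fun η : ℝ => Real.exp (-η ^ 2) := by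
  simpa using integrable_exp_neg_mul_sq (b := 1) one_pos

theorem gaussian_tail_nonneg (r : ℝ) : 0 ≤ ∫ η in Set.Ioi r, Real.exp (-η ^ 2) :=
  integral_nonneg fun _ => (Real.exp_pos _).le

theorem antitone_gaussian_tail :
    Antitone fun r : ℝ => ∫ η in Set.Ioi r, Real.exp (-η ^ 2) := fun _ _ h =>
  setIntegral_mono_set integrable_exp_neg_sq.integrableOn
    (.of_forall fun _ => (Real.exp_pos _).le) (Set.Ioi_subset_Ioi h).eventuallyLE

theorem gaussian_tail_le {r : ℝ} (hr : 0 ≤ r) :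
    ∫ η in Set.Ioi r, Real.exp (-η ^ 2) ≤
      Real.exp (-(1 / 2) * r ^ 2) * ∫ η : ℝ, Real.exp (-(1 / 2) * η ^ 2) := by
  have hint := integrable_exp_neg_mul_sq (b := 1 / 2) (by norm_num)
  calc ∫ η in Set.Ioi r, Real.exp (-η ^ 2)
      ≤ ∫ η in Set.Ioi r, Real.exp (-(1 / 2) * r ^ 2) * Real.exp (-(1 / 2) * η ^ 2) := by
        refine setIntegral_mono_on integrable_exp_neg_sq.integrableOn
          (hint.const_mul _).integrableOn measurableSet_Ioi fun η hη => ?_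
        rw [← Real.exp_add, Real.exp_le_exp]
        have : r < η := hη
        nlinarith
    _ ≤ ∫ η, Real.exp (-(1 / 2) * r ^ 2) * Real.exp (-(1 / 2) * η ^ 2) :=
        setIntegral_le_integral (hint.const_mul _) (.of_forall fun _ => by positivity)
    _ = _ := integral_const_mul _ _

theorem integrableOn_gaussian_tail_pow {k : ℕ} (hk : 1 ≤ k) :
    IntegrableOn (fun r => (∫ η in Set.Ioi r, Real.exp (-η ^ 2)) ^ k) (Set.Ioi (0 : ℝ)) := by
  have hk' : (0 : ℝ) < k := by exact_mod_cast hk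
  have hint : Integrable fun r : ℝ =>
      Real.exp (-(k / 2 : ℝ) * r ^ 2) * (∫ η : ℝ, Real.exp (-(1 / 2) * η ^ 2)) ^ k :=
    (integrable_exp_neg_mul_sq (by positivity)).mul_const _
  refine hint.integrableOn.mono'
    (antitone_gaussian_tail.measurable.pow_const k).aestronglyMeasurable ?_
  filter_upwards [ae_restrict_mem measurableSet_Ioi] with r hr
  rw [Real.norm_of_nonneg (pow_nonneg (gaussian_tail_nonneg r) k)]
  refine (pow_le_pow_left₀ (gaussian_tail_nonneg r)
    (gaussian_tail_le (le_of_lt hr)) k).trans_eq ?_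
  rw [mul_pow, ← Real.exp_nat_mul]
  ring_nf

theorem gaussian_tail_eq_mul_integral {r : ℝ} (hr : 0 < r) :
    ∫ η in Set.Ioi r, Real.exp (-η ^ 2) =
      r * ∫ η in Set.Ici (1 : ℝ), Real.exp (-r ^ 2 * η ^ 2) := by
  have h := integral_comp_mul_left_Ioi' (fun η : ℝ => Real.exp (-η ^ 2)) 1 hr
  rw [integral_Ici_eq_integral_Ioi]
  simp only [mul_one, smul_eq_mul, mul_pow] at h
  simp only [neg_mul, h]

theorem exp_neg_sq_mul_sum_sq_eq_prod {ι : Type*} [Fintype ι] (r : ℝ) (η : ι → ℝ) :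
    Real.exp (-r ^ 2 * ∑ i, η i ^ 2) = ∏ i, Real.exp (-r ^ 2 * η i ^ 2) := by
  rw [Finset.mul_sum, Real.exp_sum]

theorem volume_restrict_pi_Ici {ι : Type*} [Fintype ι] (a : ℝ) :
    (volume : Measure (ι → ℝ)).restrict (Set.univ.pi fun _ => Set.Ici a) =
      Measure.pi fun _ => volume.restrict (Set.Ici a) := by
  rw [volume_pi, Measure.restrict_pi_pi]

theorem integrableOn_exp_neg_sq_mul_sum_sq {ι : Type*} [Fintype ι] {r : ℝ} (hr : 0 < r) :
    IntegrableOn (fun η : ι → ℝ => Real.exp (-r ^ 2 * ∑ i, η i ^ 2))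
      (Set.univ.pi fun _ => Set.Ici 1) := by
  rw [IntegrableOn, volume_restrict_pi_Ici]
  simp only [exp_neg_sq_mul_sum_sq_eq_prod]
  exact Integrable.fintype_prod (f := fun _ (x : ℝ) => Real.exp (-r ^ 2 * x ^ 2))
    fun _ => (integrable_exp_neg_mul_sq (by positivity)).integrableOn

theorem gaussian_tail_pow_eq_integral (k : ℕ) {r : ℝ} (hr : 0 < r) :
    (∫ η in Set.Ioi r, Real.exp (-η ^ 2)) ^ k =
      ∫ η in Set.univ.pi (fun _ : Fin k => Set.Ici (1 : ℝ)),
        r ^ k * Real.exp (-r ^ 2 * ∑ i, η i ^ 2) := by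
  simp only [gaussian_tail_eq_mul_integral hr, mul_pow, integral_const_mul,
    volume_restrict_pi_Ici, exp_neg_sq_mul_sum_sq_eq_prod]
  rw [integral_fintype_prod_eq_pow (fun x : ℝ => Real.exp (-r ^ 2 * x ^ 2)), Fintype.card_fin]

theorem integral_pow_mul_exp_neg_sq_mul (k : ℕ) {s : ℝ} (hs : 0 < s) :
    ∫ r in Set.Ioi (0 : ℝ), r ^ k * Real.exp (-r ^ 2 * s) =
      (1 / 2) * Real.Gamma (((k : ℝ) + 1) / 2) * s ^ (-((k : ℝ) + 1) / 2) := by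
  have h := integral_rpow_mul_exp_neg_mul_rpow (p := 2) (q := k) (b := s) two_pos
    (by linarith [k.cast_nonneg (α := ℝ)]) hs
  simp only [Real.rpow_natCast, Real.rpow_two] at h
  simp only [mul_comm _ s, mul_neg, neg_mul] at h ⊢
  rw [h]
  ring

theorem integrable_prod_pow_mul_exp_neg_sq_mul_sum_sq {k : ℕ} (hk : 1 ≤ k) :
    Integrable (fun p : ℝ × (Fin k → ℝ) => p.1 ^ k * Real.exp (-p.1 ^ 2 * ∑ i, p.2 i ^ 2))
      ((volume.restrict (Set.Ioi 0)).prod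
        (volume.restrict (Set.univ.pi fun _ => Set.Ici 1))) := by
  refine (integrable_prod_iff (Continuous.aestronglyMeasurable (by fun_prop))).2 ⟨?_, ?_⟩
  · filter_upwards [ae_restrict_mem measurableSet_Ioi] with r hr
    exact (integrableOn_exp_neg_sq_mul_sum_sq hr).const_mul _
  · refine (integrableOn_gaussian_tail_pow hk).congr ?_
    filter_upwards [ae_restrict_mem measurableSet_Ioi] with r hr
    have hr' : 0 < r := hr
    rw [gaussian_tail_pow_eq_integral k hr']
    congr with η
    exact (Real.norm_of_nonneg (by positivity)).symm

theorem integral_gaussian_tail_pow (k : ℕ) (hk : 1 ≤ k) :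
    (∫ r in Set.Ioi (0:ℝ), (∫ η in Set.Ioi r, Real.exp (-η ^ 2)) ^ k)
        = (1 / 2) * Real.Gamma (((k : ℝ) + 1) / 2) *
            ∫ η in Set.univ.pi (fun _ : Fin k => Set.Ici (1:ℝ)),
              (∑ i, (η i) ^ 2) ^ (-((k : ℝ) + 1) / 2) ∧
    IntegrableOn (fun r => (∫ η in Set.Ioi r, Real.exp (-η ^ 2)) ^ k)
      (Set.Ioi (0:ℝ)) ∧
    IntegrableOn (fun η : Fin k → ℝ => (∑ i, (η i) ^ 2) ^ (-((k : ℝ) + 1) / 2))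
      (Set.univ.pi fun _ : Fin k => Set.Ici (1:ℝ)) volume := by
  have hF := integrable_prod_pow_mul_exp_neg_sq_mul_sum_sq hk
  have hmeas : MeasurableSet (Set.univ.pi fun _ : Fin k => Set.Ici (1:ℝ)) :=
    .univ_pi fun _ => measurableSet_Ici
  have hinner : ∀ η ∈ Set.univ.pi (fun _ : Fin k => Set.Ici (1:ℝ)),
      ∫ r in Set.Ioi (0 : ℝ), r ^ k * Real.exp (-r ^ 2 * ∑ i, η i ^ 2) =
        (1 / 2) * Real.Gamma (((k : ℝ) + 1) / 2) *
          (∑ i, η i ^ 2) ^ (-((k : ℝ) + 1) / 2) := fun η hη => by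
    refine integral_pow_mul_exp_neg_sq_mul k (Finset.sum_pos (fun i _ => ?_) ⟨⟨0, hk⟩, mem_univ _⟩)
    have : (1 : ℝ) ≤ η i := hη i trivial
    positivity
  have hΓ : 0 < Real.Gamma (((k : ℝ) + 1) / 2) := Real.Gamma_pos_of_pos (by positivity)
  refine ⟨?_, integrableOn_gaussian_tail_pow hk, ?_⟩
  · rw [setIntegral_congr_fun measurableSet_Ioi fun r hr => gaussian_tail_pow_eq_integral k hr,
      integral_integral_swap hF, setIntegral_congr_fun hmeas hinner, integral_const_mul]
  · refine (integrable_const_mul_iff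
      (c := (1 / 2) * Real.Gamma (((k : ℝ) + 1) / 2)) (by simp [hΓ.ne']) _).1 ?_
    exact hF.integral_prod_right.congr
      ((ae_restrict_mem hmeas).mono hinner)
end
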